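/- arXiv:1807.08795 — 2 statements merged into one kernel-verified Lean document; each statement's English description precedes it below -/
import Mathlib

section
/- Let S = (s_1 < ⋯ < s_r) be a strictly increasing sequence of positive integers with r ≥ 2, let a ≠ b be elements of {1,…,r}, and set L = {x ∈ ℝ^r : x_a = x_b}. Then there exists a homeomorphism ψ from Π_S ∩ L (with the subspace topology) onto the permutohedron Π_{(s_1,…,s_{r−1})} ⊂ ℝ^{r−1} such that: (i) for every ordered partition 𝔭 of {1,…,r} in which a and b lie in different blocks, Π_𝔭 ∩ L = ∅; and (ii) for every ordered partition 𝔭 of {1,…,r} in which a and b lie in the same block, ψ maps Π_𝔭 ∩ L homeomorphically onto the face of Π_{(s_1,…,s_{r−1})} associated with the b-reduction 𝔭' of 𝔭. -/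
/-- The permutohedron in `ℝ^r` on the values `s 0, …, s (r-1)`. -/
def permutohedron (r : ℕ) (s : ℕ → ℝ) : Set (Fin r → ℝ) :=
  convexHull ℝ {x : Fin r → ℝ | ∃ σ : Equiv.Perm (Fin r), ∀ i, x i = s (σ i)}

/-- An ordered partition of `{1,…,r}` with `k+1` blocks: pairwise disjoint nonempty
subsets covering everything. -/
def IsOrderedPartition {r k : ℕ} (Q : Fin (k + 1) → Finset (Fin r)) : Prop :=
  (∀ j, (Q j).Nonempty) ∧ (∀ j j', j ≠ j' → Disjoint (Q j) (Q j')) ∧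
    Finset.univ.biUnion Q = (Finset.univ : Finset (Fin r))

/-- The face of the permutohedron on `s` associated with the ordered partition `Q`:
cut out by the equalities `∑_{i ∈ P_1 ∪ ⋯ ∪ P_j} x_i = τ_{m_j}`. -/
def partitionFace {r k : ℕ} (s : ℕ → ℝ) (Q : Fin (k + 1) → Finset (Fin r)) :
    Set (Fin r → ℝ) :=
  permutohedron r s ∩
    ⋂ j : Fin (k + 1),
      {x : Fin r → ℝ |
        ∑ i ∈ (Finset.univ.filter (fun j' => j' ≤ j)).biUnion Q, x i =
          ∑ i ∈ Finset.range
              (∑ j' ∈ Finset.univ.filter (fun j' => j' ≤ j), (Q j').card),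
            s i}

/-- Re-indexing map of `{1,…,r} \ {b}` onto `{1,…,r-1}` (here `r` is `r+2`): indices below `b`
are kept, indices above `b` are shifted down by one. -/
def reduceIdx {r : ℕ} (b : Fin (r + 2)) (x : Fin (r + 2)) : Fin (r + 1) :=
  if _h : (x : ℕ) < (b : ℕ) then ⟨x, by have hb := b.isLt; omega⟩
  else ⟨(x : ℕ) - 1, by have hx := x.isLt; omega⟩

/-- The `b`-reduction of an ordered partition: drop `b` and re-index. -/
def reducePartition {r k : ℕ} (b : Fin (r + 2)) (Q : Fin (k + 1) → Finset (Fin (r + 2))) :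
    Fin (k + 1) → Finset (Fin (r + 1)) :=
  fun j => ((Q j).erase b).image (reduceIdx b)

/-!
After dropping `x_b`, the section of the permutohedron by `x_a = x_b` is a weighted permutohedron,
in which the merged coordinate counts twice. So it suffices to identify weighted permutohedra for
different weights in a way that preserves which of the defining inequalities are tight.

For every set `A` of coordinates, a point `y` has a slack in the inequality of `A` and a gap
between its values in `A` and outside `A`; the identification matches the points which have the
same ratio of slack to gap for all `A`. Only the initial segments in the order of increasing `y`
matter, and along these the weighted prefix sums of the point sought form a broken line above a
strictly convex obstacle, whose kink at each breakpoint is in a prescribed ratio to its height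
above the obstacle. This linear problem has a unique solution by a discrete minimum principle.
The matching is a closed relation between compact spaces and is symmetric, so it is the graph of a
homeomorphism.
-/

open Finset

section PartialSum

/-- The partial sum `τ_m = u_0 + ⋯ + u_{m-1}` of the sequence defining a permutohedron. -/
def partialSum (u : ℕ → ℝ) (m : ℕ) : ℝ := ∑ i ∈ range m, u i

theorem partialSum_zero (u : ℕ → ℝ) : partialSum u 0 = 0 := sum_range_zero u

theorem partialSum_succ (u : ℕ → ℝ) (m : ℕ) : partialSum u (m + 1) = partialSum u m + u m :=
  sum_range_succ u m

theorem partialSum_chord_lt {u : ℕ → ℝ} (hu : StrictMono u) (m : ℕ) {k l : ℕ}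
    (hk : 0 < k) (hl : 0 < l) :
    (partialSum u (m + k) - partialSum u m) / k <
      (partialSum u (m + k + l) - partialSum u (m + k)) / l := by
  have chord (m k : ℕ) : partialSum u (m + k) - partialSum u m = ∑ i ∈ range k, u (m + i) := by
    rw [partialSum, partialSum, sum_range_add, add_sub_cancel_left]
  calc (partialSum u (m + k) - partialSum u m) / k
      < u (m + k) := by
        rw [chord, div_lt_iff₀' (by positivity)]
        calc ∑ i ∈ range k, u (m + i) < ∑ _i ∈ range k, u (m + k) :=
              sum_lt_sum_of_nonempty (nonempty_range_iff.2 hk.ne')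
                fun i hi => hu (Nat.add_lt_add_left (mem_range.1 hi) m)
          _ = k * u (m + k) := by simp
    _ ≤ (partialSum u (m + k + l) - partialSum u (m + k)) / l := by
        rw [chord, le_div_iff₀' (by positivity)]
        calc l * u (m + k) = ∑ _i ∈ range l, u (m + k) := by simp
          _ ≤ ∑ i ∈ range l, u (m + k + i) :=
              sum_le_sum fun i _ => hu.monotone (Nat.le_add_right _ i)

end PartialSum

section Slack

variable {ι κ : Type*} {u : ℕ → ℝ} {w : ι → ℕ} {y : ι → ℝ} {A : Finset ι}

/-- The slack of `y` in the inequality `τ_{w(A)} ≤ ∑_{i ∈ A} w_i y_i`, where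
`w(A) = ∑_{i ∈ A} w_i`. For `w = 1` these are the inequalities defining the permutohedron, and
faces are cut out by the vanishing of slacks. -/
def slack (u : ℕ → ℝ) (w : ι → ℕ) (y : ι → ℝ) (A : Finset ι) : ℝ :=
  ∑ i ∈ A, w i * y i - partialSum u (∑ i ∈ A, w i)

theorem slack_empty (u : ℕ → ℝ) (w : ι → ℕ) (y : ι → ℝ) : slack u w y ∅ = 0 := by
  simp [slack, partialSum_zero]

theorem slack_insert [DecidableEq ι] {k : ι} (hk : k ∉ A) :
    slack u w y (insert k A) = slack u w y A +
      (w k * y k - (partialSum u (∑ i ∈ A, w i + w k) - partialSum u (∑ i ∈ A, w i))) := by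
  simp only [slack, sum_insert hk, add_comm (w k)]
  ring

theorem continuous_slack (u : ℕ → ℝ) (w : ι → ℕ) (A : Finset ι) :
    Continuous fun y : ι → ℝ => slack u w y A := by
  unfold slack
  fun_prop

-- Removing `i` bounds `y i` above by a chord slope of `τ`, adding `k` bounds `y k` below by the
-- next chord slope, and `τ` is strictly convex.
theorem lt_of_forall_slack_le (hu : StrictMono u) (hw : ∀ i, 0 < w i)
    (hA : ∀ B, slack u w y A ≤ slack u w y B) {i k : ι} (hi : i ∈ A) (hk : k ∉ A) :
    y i < y k := by
  classical
  have hremove := hA (A.erase i)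
  have hadd := hA (insert k A)
  rw [slack_insert hk] at hadd
  have hiA := notMem_erase i A
  rw [← insert_erase hi, slack_insert hiA, insert_erase hi] at hremove
  have hweight := sum_erase_add A w hi
  rw [← hweight] at hadd
  have hwi : (0 : ℝ) < w i := Nat.cast_pos.2 (hw i)
  have hwk : (0 : ℝ) < w k := Nat.cast_pos.2 (hw k)
  set m := ∑ l ∈ A.erase i, w l
  calc y i ≤ (partialSum u (m + w i) - partialSum u m) / w i := by
        rw [le_div_iff₀' hwi]; linarith
    _ < (partialSum u (m + w i + w k) - partialSum u (m + w i)) / w k :=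
        partialSum_chord_lt hu m (hw i) (hw k)
    _ ≤ y k := by rw [div_le_iff₀' hwk]; linarith

/-- The weight of a coordinate obtained by identifying the coordinates in each fibre of `π`. -/
def fiberWeight [Fintype κ] [DecidableEq ι] (w : κ → ℕ) (π : κ → ι) (i : ι) : ℕ :=
  ∑ k with π k = i, w k

theorem slack_comp_preimage [Fintype κ] [DecidableEq ι] (u : ℕ → ℝ) (w : κ → ℕ) (π : κ → ι)
    (y : ι → ℝ) (A : Finset ι) :
    slack u w (y ∘ π) {k | π k ∈ A} = slack u (fiberWeight w π) y A := by
  simp only [slack, fiberWeight]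
  rw [sum_fiberwise_eq_sum_filter, ← sum_fiberwise_eq_sum_filter univ A π]
  congr 1
  refine sum_congr rfl fun i _ => ?_
  rw [Nat.cast_sum, sum_mul]
  refine sum_congr rfl fun k hk => ?_
  rw [Function.comp_apply, (mem_filter_univ _).1 hk]

end Slack

section WeightedPermutohedron

variable {ι κ : Type*} [Fintype ι] [Fintype κ] {u : ℕ → ℝ} {w : ι → ℕ} {y : ι → ℝ} {A : Finset ι}

/-- The weighted permutohedron: the polytope of all `y` with `τ_{w(A)} ≤ ∑_{i ∈ A} w_i y_i` for
every `A`, with equality when `A` is everything. It is the permutohedron for `w = 1`, while the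
section of a permutohedron by `x_a = x_b` has weight `2` on the merged coordinate. -/
def weightedPermutohedron (u : ℕ → ℝ) (w : ι → ℕ) : Set (ι → ℝ) :=
  {y | (∀ A, 0 ≤ slack u w y A) ∧ slack u w y univ = 0}

theorem isClosed_weightedPermutohedron (u : ℕ → ℝ) (w : ι → ℕ) :
    IsClosed (weightedPermutohedron u w) := by
  have hinter : weightedPermutohedron u w =
      (⋂ A, {y | 0 ≤ slack u w y A}) ∩ {y | slack u w y univ = 0} := by
    ext y
    simp only [weightedPermutohedron, Set.mem_inter_iff, Set.mem_iInter, Set.mem_ofPred_eq]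
  rw [hinter]
  exact (isClosed_iInter fun A => isClosed_le continuous_const (continuous_slack u w A)).inter
    (isClosed_eq (continuous_slack u w _) continuous_const)

theorem isCompact_weightedPermutohedron (hw : ∀ i, 0 < w i) :
    IsCompact (weightedPermutohedron u w) := by
  classical
  refine (isCompact_univ_pi fun i => isCompact_Icc
    (a := partialSum u (w i) / w i)
    (b := (partialSum u (∑ k, w k) - partialSum u (∑ k ∈ univ.erase i, w k)) / w i))
    |>.of_isClosed_subset (isClosed_weightedPermutohedron u w) fun y hy i _ => ?_
  have hwi : (0 : ℝ) < w i := Nat.cast_pos.2 (hw i)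
  have hsingle := hy.1 {i}
  have herase := hy.1 (univ.erase i)
  have htotal := hy.2
  have hsum := sum_erase_add univ (fun k => w k * y k) (mem_univ i)
  simp only [slack, sum_singleton] at hsingle herase htotal
  constructor
  · rw [div_le_iff₀' hwi]; linarith
  · rw [le_div_iff₀' hwi]; linarith

theorem convex_weightedPermutohedron (u : ℕ → ℝ) (w : ι → ℕ) :
    Convex ℝ (weightedPermutohedron u w) := by
  intro x hx y hy a b ha hb hab
  have hslack (A : Finset ι) :
      slack u w (a • x + b • y) A = a * slack u w x A + b * slack u w y A := by
    have hsum : ∑ i ∈ A, (w i : ℝ) * (a • x + b • y) i =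
        a * ∑ i ∈ A, w i * x i + b * ∑ i ∈ A, w i * y i := by
      simp only [Pi.add_apply, Pi.smul_apply, smul_eq_mul, mul_sum, ← sum_add_distrib]
      exact sum_congr rfl fun i _ => by ring
    rw [slack, slack, slack, hsum]
    linear_combination partialSum u (∑ i ∈ A, w i) * hab
  refine ⟨fun A => ?_, ?_⟩
  · rw [hslack]
    exact add_nonneg (mul_nonneg ha (hx.1 A)) (mul_nonneg hb (hy.1 A))
  · rw [hslack, hx.2, hy.2, mul_zero, mul_zero, add_zero]

theorem lt_of_slack_eq_zero (hu : StrictMono u) (hw : ∀ i, 0 < w i)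
    (hy : y ∈ weightedPermutohedron u w) (hA : slack u w y A = 0) {i k : ι} (hi : i ∈ A)
    (hk : k ∉ A) : y i < y k :=
  lt_of_forall_slack_le hu hw (fun B => hA.trans_le (hy.1 B)) hi hk

theorem mem_weightedPermutohedron_of_forall_strict_lower (hu : StrictMono u) (hw : ∀ i, 0 < w i)
    (hlower : ∀ A, (∀ i ∈ A, ∀ k ∉ A, y i < y k) → 0 ≤ slack u w y A)
    (huniv : slack u w y univ = 0) : y ∈ weightedPermutohedron u w := by
  obtain ⟨A, hA⟩ := Finite.exists_min (slack u w y)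
  exact ⟨fun B => (hlower A fun i hi k hk => lt_of_forall_slack_le hu hw hA hi hk).trans (hA B),
    huniv⟩

variable [DecidableEq ι]

-- A set minimizing the slack of `y ∘ π` separates only points with different values of `y ∘ π`,
-- so it is a union of fibres of `π`.
theorem comp_mem_weightedPermutohedron_iff (hu : StrictMono u) {w : κ → ℕ} (hw : ∀ k, 0 < w k)
    {π : κ → ι} :
    y ∘ π ∈ weightedPermutohedron u w ↔
      y ∈ weightedPermutohedron u (fiberWeight w π) := by
  constructor
  · rintro ⟨hnonneg, huniv⟩
    refine ⟨fun A => ?_, ?_⟩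
    · rw [← slack_comp_preimage]
      exact hnonneg _
    · rw [← slack_comp_preimage]
      simpa using huniv
  · rintro ⟨hnonneg, huniv⟩
    refine mem_weightedPermutohedron_of_forall_strict_lower hu hw (fun C hC => ?_) ?_
    · have hsaturated : C = ({k | π k ∈ C.image π} : Finset κ) := by
        ext k
        simp only [mem_filter_univ, mem_image]
        refine ⟨fun hk => ⟨k, hk, rfl⟩, fun ⟨l, hl, hlk⟩ => ?_⟩
        by_contra hk
        exact (hC l hl k hk).ne (congrArg y hlk)
      rw [hsaturated, slack_comp_preimage]
      exact hnonneg _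
    · rw [← slack_comp_preimage] at huniv
      simpa using huniv

end WeightedPermutohedron

section Gap

variable {ι : Type*} {y : ι → ℝ} {A : Finset ι}

/-- The gap `min_{i ∈ A, k ∉ A} (y_k - y_i)⁺` by which the values of `y` outside `A` exceed those
in `A`; for `A` empty or everything the infimum has the junk value `0`. -/
noncomputable def gap (y : ι → ℝ) (A : Finset ι) : ℝ :=
  ⨅ e : A × {k // k ∉ A}, (y e.2 - y e.1)⁺

theorem gap_nonneg (y : ι → ℝ) (A : Finset ι) : 0 ≤ gap y A :=
  Real.iInf_nonneg fun _ => posPart_nonneg _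

theorem gap_empty (y : ι → ℝ) : gap y ∅ = 0 :=
  Real.iInf_of_isEmpty _

theorem gap_univ [Fintype ι] (y : ι → ℝ) : gap y univ = 0 := by
  have : IsEmpty {k // k ∉ (univ : Finset ι)} := ⟨fun k => k.2 (mem_univ _)⟩
  exact Real.iInf_of_isEmpty _

variable [Finite ι]

theorem gap_le (y : ι → ℝ) {i k : ι} (hi : i ∈ A) (hk : k ∉ A) : gap y A ≤ (y k - y i)⁺ :=
  ciInf_le (Set.finite_range _).bddBelow (⟨⟨i, hi⟩, ⟨k, hk⟩⟩ : A × {k // k ∉ A})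

theorem gap_eq_zero_of_le {i k : ι} (hi : i ∈ A) (hk : k ∉ A) (h : y k ≤ y i) : gap y A = 0 :=
  ((gap_le y hi hk).trans_eq (posPart_of_nonpos (sub_nonpos.2 h))).antisymm (gap_nonneg y A)

theorem gap_pos_iff {i k : ι} (hi : i ∈ A) (hk : k ∉ A) :
    0 < gap y A ↔ ∀ l ∈ A, ∀ m ∉ A, y l < y m := by
  constructor
  · intro h l hl m hm
    by_contra hle
    exact h.ne' (gap_eq_zero_of_le hl hm (not_lt.1 hle))
  · intro h
    have : Nonempty (A × {k // k ∉ A}) := ⟨⟨⟨i, hi⟩, ⟨k, hk⟩⟩⟩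
    obtain ⟨e, he⟩ := exists_eq_ciInf_of_finite (f := fun e : A × {k // k ∉ A} => (y e.2 - y e.1)⁺)
    rw [gap, ← he]
    exact posPart_pos (sub_pos.2 (h _ e.1.2 _ e.2.2))

theorem continuous_gap (A : Finset ι) : Continuous fun y : ι → ℝ => gap y A := by
  classical
  have := Fintype.ofFinite ι
  unfold gap
  rcases isEmpty_or_nonempty (A × {k // k ∉ A}) with h | h
  · simp only [Real.iInf_of_isEmpty]
    exact continuous_const
  · simp only [← inf'_univ_eq_ciInf]
    exact Continuous.finset_inf'_apply _ fun e _ => by fun_prop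

end Gap

section Compatible

variable {ι : Type*} {u : ℕ → ℝ} {p q : ι → ℕ} {y y' : ι → ℝ} {A : Finset ι}

/-- Points of two weighted permutohedra are compatible when each inequality has the same ratio of
slack to gap at both, written without division. Compatible points lie on the same faces. -/
def Compatible (u : ℕ → ℝ) (p q : ι → ℕ) (y y' : ι → ℝ) : Prop :=
  ∀ A, slack u p y A * gap y' A = slack u q y' A * gap y A

theorem Compatible.symm (h : Compatible u p q y y') : Compatible u q p y' y :=
  fun A => (h A).symm

theorem isClosed_setOf_compatible [Finite ι] (u : ℕ → ℝ) (p q : ι → ℕ) :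
    IsClosed {z : (ι → ℝ) × (ι → ℝ) | Compatible u p q z.1 z.2} := by
  have hinter : {z : (ι → ℝ) × (ι → ℝ) | Compatible u p q z.1 z.2} =
      ⋂ A, {z | slack u p z.1 A * gap z.2 A = slack u q z.2 A * gap z.1 A} := by
    ext z
    simp only [Compatible, Set.mem_iInter, Set.mem_ofPred_eq]
  rw [hinter]
  exact isClosed_iInter fun A => isClosed_eq
    (((continuous_slack u p A).comp continuous_fst).mul ((continuous_gap A).comp continuous_snd))
    (((continuous_slack u q A).comp continuous_snd).mul ((continuous_gap A).comp continuous_fst))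

variable [Fintype ι]

theorem Compatible.slack_eq_zero (h : Compatible u p q y y') (hu : StrictMono u)
    (hp : ∀ i, 0 < p i) (hy : y ∈ weightedPermutohedron u p)
    (hy' : y' ∈ weightedPermutohedron u q) (hA : slack u p y A = 0) : slack u q y' A = 0 := by
  rcases A.eq_empty_or_nonempty with rfl | ⟨i, hi⟩
  · exact slack_empty u q y'
  by_cases hk : ∃ k, k ∉ A
  · obtain ⟨k, hk⟩ := hk
    have hgap : 0 < gap y A :=
      (gap_pos_iff hi hk).2 fun _ hl _ hm => lt_of_slack_eq_zero hu hp hy hA hl hm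
    have hmul := h A
    rw [hA, zero_mul, eq_comm] at hmul
    exact (mul_eq_zero.1 hmul).resolve_right hgap.ne'
  · rw [eq_univ_iff_forall.2 (not_exists_not.1 hk)]
    exact hy'.2

-- If the values of `y` jump at `A = {l | y l ≤ y i}` but those of `y'` do not, compatibility makes
-- `A` tight for `y'`, and tight sets do separate the values.
theorem Compatible.lt (h : Compatible u p q y y') (hu : StrictMono u) (hq : ∀ i, 0 < q i)
    (hy' : y' ∈ weightedPermutohedron u q) {i k : ι} (hik : y i < y k) : y' i < y' k := by
  set A : Finset ι := {l | y l ≤ y i}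
  have hi : i ∈ A := (mem_filter_univ i).2 le_rfl
  have hk : k ∉ A := fun hk => hik.not_ge ((mem_filter_univ k).1 hk)
  have hgap : 0 < gap y A := (gap_pos_iff hi hk).2 fun l hl m hm =>
    ((mem_filter_univ l).1 hl).trans_lt (not_le.1 fun hle => hm ((mem_filter_univ m).2 hle))
  by_contra hle
  have hmul := h A
  rw [gap_eq_zero_of_le hi hk (not_lt.1 hle), mul_zero, eq_comm] at hmul
  exact hle (lt_of_slack_eq_zero hu hq hy' ((mul_eq_zero.1 hmul).resolve_right hgap.ne') hi hk)

theorem Compatible.le (h : Compatible u p q y y') (hu : StrictMono u) (hp : ∀ i, 0 < p i)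
    (hy : y ∈ weightedPermutohedron u p) {i k : ι} (hik : y i ≤ y k) : y' i ≤ y' k :=
  not_lt.1 fun hlt => (h.symm.lt hu hp hy hlt).not_ge hik

end Compatible

section ObstacleProblem

variable {N : ℕ} {q : Fin (N + 1) → ℝ} {α β : Fin N → ℝ} {Φ Y Z : Fin (N + 2) → ℝ}

/-- The slope of the `i`-th chord of the broken line with heights `x`, whose consecutive
breakpoints are at distances `q i`. -/
noncomputable def chordSlope (q : Fin (N + 1) → ℝ) (x : Fin (N + 2) → ℝ) (i : Fin (N + 1)) : ℝ :=
  (x i.succ - x i.castSucc) / q i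

/-- The jump of slope of a broken line at its `j`-th interior breakpoint `j.succ.castSucc`. -/
noncomputable def kink (q : Fin (N + 1) → ℝ) (x : Fin (N + 2) → ℝ) (j : Fin N) : ℝ :=
  chordSlope q x j.succ - chordSlope q x j.castSucc

theorem kink_sub (q : Fin (N + 1) → ℝ) (x z : Fin (N + 2) → ℝ) (j : Fin N) :
    kink q (x - z) j = kink q x j - kink q z j := by
  simp only [kink, chordSlope, Pi.sub_apply]
  ring

theorem kink_nonneg_of_isMin (hq : ∀ i, 0 < q i) {x : Fin (N + 2) → ℝ} {j : Fin N}
    (hmin : ∀ i, x j.succ.castSucc ≤ x i) : 0 ≤ kink q x j :=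
  sub_nonneg.2 <| (div_nonpos_of_nonpos_of_nonneg (sub_nonpos.2 (hmin _)) (hq _).le).trans
    (div_nonneg (sub_nonneg.2 (hmin _)) (hq _).le)

theorem kink_pos_of_isMin_of_lt (hq : ∀ i, 0 < q i) {x : Fin (N + 2) → ℝ} {j : Fin N}
    (hmin : ∀ i, x j.succ.castSucc ≤ x i) (hlt : x j.succ.castSucc < x j.castSucc.castSucc) :
    0 < kink q x j :=
  sub_pos.2 <| (div_neg_of_neg_of_pos (sub_neg.2 hlt) (hq _)).trans_le
    (div_nonneg (sub_nonneg.2 (hmin _)) (hq _).le)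

-- At the first point where a negative minimum is attained, the kink is positive.
theorem nonneg_of_mul_kink_le (hq : ∀ i, 0 < q i) (hα : ∀ j, 0 ≤ α j) (hβ : ∀ j, 0 ≤ β j)
    (hαβ : ∀ j, 0 < α j + β j) {x : Fin (N + 2) → ℝ} (hzero : 0 ≤ x 0) (hlast : 0 ≤ x (Fin.last _))
    (hx : ∀ j, α j * kink q x j ≤ β j * x j.succ.castSucc) (i : Fin (N + 2)) : 0 ≤ x i := by
  obtain ⟨m, hm⟩ := Finite.exists_min fun i => toLex (x i, i)
  simp only [Prod.Lex.toLex_le_toLex] at hm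
  have hmin (i : Fin (N + 2)) : x m ≤ x i := (hm i).elim le_of_lt fun h => h.1.le
  refine le_trans (not_lt.1 fun hneg => ?_) (hmin i)
  obtain ⟨k, rfl⟩ := Fin.exists_castSucc_eq.2 fun h : m = Fin.last _ => hneg.not_ge (h ▸ hlast)
  obtain ⟨j, rfl⟩ := Fin.exists_succ_eq.2 fun h : k = 0 => hneg.not_ge (h ▸ hzero)
  have hprev : x j.succ.castSucc < x j.castSucc.castSucc :=
    (hm j.castSucc.castSucc).resolve_right fun h => h.2.not_gt j.castSucc_lt_succ
  have hkink := kink_pos_of_isMin_of_lt hq hmin hprev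
  have hαkink := mul_nonneg (hα j) hkink.le
  have hβx := mul_nonpos_of_nonneg_of_nonpos (hβ j) hneg.le
  have hα0 : α j = 0 :=
    (mul_eq_zero.1 (((hx j).trans hβx).antisymm hαkink)).resolve_right hkink.ne'
  have hβ0 : β j = 0 :=
    (mul_eq_zero.1 (hβx.antisymm (hαkink.trans (hx j)))).resolve_right hneg.ne
  exact (hαβ j).ne' (by rw [hα0, hβ0, add_zero])

/-- `Y` solves the discrete obstacle problem over `Φ`: it agrees with `Φ` at the ends, and at each
interior breakpoint `j` its kink and its height above `Φ` are in the prescribed ratio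
`β j : α j`. -/
structure IsBalanced (q : Fin (N + 1) → ℝ) (α β : Fin N → ℝ) (Φ Y : Fin (N + 2) → ℝ) : Prop where
  zero : Y 0 = Φ 0
  last : Y (Fin.last _) = Φ (Fin.last _)
  mul_kink : ∀ j, α j * kink q Y j = β j * (Y j.succ.castSucc - Φ j.succ.castSucc)

namespace IsBalanced

theorem le (hq : ∀ i, 0 < q i) (hα : ∀ j, 0 ≤ α j) (hβ : ∀ j, 0 ≤ β j)
    (hαβ : ∀ j, 0 < α j + β j) (hY : IsBalanced q α β Φ Y) (hZ : IsBalanced q α β Φ Z) :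
    Y ≤ Z := by
  intro i
  refine sub_nonneg.1 (nonneg_of_mul_kink_le hq hα hβ hαβ (x := Z - Y) ?_ ?_ (fun j => ?_) i)
  · rw [Pi.sub_apply, hY.zero, hZ.zero, sub_self]
  · rw [Pi.sub_apply, hY.last, hZ.last, sub_self]
  · rw [kink_sub, Pi.sub_apply]
    linear_combination hZ.mul_kink j - hY.mul_kink j

theorem unique (hq : ∀ i, 0 < q i) (hα : ∀ j, 0 ≤ α j) (hβ : ∀ j, 0 ≤ β j)
    (hαβ : ∀ j, 0 < α j + β j) (hY : IsBalanced q α β Φ Y) (hZ : IsBalanced q α β Φ Z) :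
    Y = Z :=
  (le hq hα hβ hαβ hY hZ).antisymm (le hq hα hβ hαβ hZ hY)

-- The problem is a square linear system, so uniqueness of its solutions gives existence.
theorem exists_isBalanced (hq : ∀ i, 0 < q i) (hα : ∀ j, 0 ≤ α j) (hβ : ∀ j, 0 ≤ β j)
    (hαβ : ∀ j, 0 < α j + β j) (Φ : Fin (N + 2) → ℝ) : ∃ Y, IsBalanced q α β Φ Y := by
  let T : (Fin (N + 2) → ℝ) →ₗ[ℝ] ℝ × ℝ × (Fin N → ℝ) :=
    { toFun := fun x =>
        (x 0, x (Fin.last _), fun j => α j * kink q x j - β j * x j.succ.castSucc)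
      map_add' := fun x z => Prod.ext rfl <| Prod.ext rfl <| funext fun j => by
        simp only [kink, chordSlope, Pi.add_apply, Prod.snd_add]
        ring
      map_smul' := fun c x => Prod.ext rfl <| Prod.ext rfl <| funext fun j => by
        simp only [kink, chordSlope, Pi.smul_apply, smul_eq_mul, Prod.smul_snd, RingHom.id_apply]
        ring }
  let rhs (Ψ : Fin (N + 2) → ℝ) : ℝ × ℝ × (Fin N → ℝ) :=
    (Ψ 0, Ψ (Fin.last _), fun j => -(β j * Ψ j.succ.castSucc))
  have hT (Ψ x : Fin (N + 2) → ℝ) : T x = rhs Ψ ↔ IsBalanced q α β Ψ x := by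
    simp only [T, rhs, LinearMap.coe_mk, AddHom.coe_mk, Prod.mk.injEq, funext_iff]
    constructor
    · rintro ⟨hzero, hlast, hkink⟩
      exact ⟨hzero, hlast, fun j => by linear_combination hkink j⟩
    · rintro ⟨hzero, hlast, hkink⟩
      exact ⟨hzero, hlast, fun j => by linear_combination hkink j⟩
  have hinjective : Function.Injective T := by
    rw [injective_iff_map_eq_zero]
    intro x hx
    have hrhs : rhs 0 = 0 := Prod.ext rfl <| Prod.ext rfl <| funext fun j => by simp [rhs]
    exact unique hq hα hβ hαβ ((hT 0 x).1 (hx.trans hrhs.symm))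
      ((hT 0 0).1 ((map_zero T).trans hrhs.symm))
  have hfinrank : Module.finrank ℝ (Fin (N + 2) → ℝ) =
      Module.finrank ℝ (ℝ × ℝ × (Fin N → ℝ)) := by
    simp only [Module.finrank_prod, Module.finrank_self, Module.finrank_fin_fun]
    ring
  obtain ⟨Y, hY⟩ := (LinearMap.injective_iff_surjective_of_finrank_eq_finrank hfinrank).1
    hinjective (rhs Φ)
  exact ⟨Y, (hT Φ Y).1 hY⟩

theorem obstacle_le (hq : ∀ i, 0 < q i) (hα : ∀ j, 0 ≤ α j) (hβ : ∀ j, 0 ≤ β j)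
    (hαβ : ∀ j, 0 < α j + β j) (hΦ : ∀ j, 0 < kink q Φ j) (hY : IsBalanced q α β Φ Y) :
    Φ ≤ Y := by
  intro i
  refine sub_nonneg.1 (nonneg_of_mul_kink_le hq hα hβ hαβ (x := Y - Φ) ?_ ?_ (fun j => ?_) i)
  · rw [Pi.sub_apply, hY.zero, sub_self]
  · rw [Pi.sub_apply, hY.last, sub_self]
  · rw [kink_sub, mul_sub, hY.mul_kink, Pi.sub_apply]
    exact sub_le_self _ (mul_nonneg (hα j) (hΦ j).le)

theorem kink_nonneg (hq : ∀ i, 0 < q i) (hα : ∀ j, 0 ≤ α j) (hβ : ∀ j, 0 ≤ β j)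
    (hαβ : ∀ j, 0 < α j + β j) (hΦ : ∀ j, 0 < kink q Φ j) (hY : IsBalanced q α β Φ Y)
    (j : Fin N) : 0 ≤ kink q Y j := by
  have hle := obstacle_le hq hα hβ hαβ hΦ hY
  rcases (hα j).eq_or_lt with hα0 | hαpos
  · have hβpos : 0 < β j := by simpa [← hα0] using hαβ j
    have hcontact : (Y - Φ) j.succ.castSucc = 0 := by
      have hmul := hY.mul_kink j
      rw [← hα0, zero_mul, eq_comm] at hmul
      exact (mul_eq_zero.1 hmul).resolve_left hβpos.ne'
    have hmin := kink_nonneg_of_isMin hq fun i =>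
      hcontact.trans_le (sub_nonneg.2 (hle i) : 0 ≤ (Y - Φ) i)
    rw [kink_sub] at hmin
    exact (hΦ j).le.trans (sub_nonneg.1 hmin)
  · refine nonneg_of_mul_nonneg_right (a := α j) ?_ hαpos
    rw [hY.mul_kink]
    exact mul_nonneg (hβ j) (sub_nonneg.2 (hle _))

end IsBalanced

end ObstacleProblem

section InitialSegment

variable {ι : Type*} {n : ℕ} {e : Fin n ≃ ι} {y : ι → ℝ} {A : Finset ι}

/-- The first `j` elements of the enumeration `e`. -/
def initialSegment (e : Fin n ≃ ι) (j : Fin (n + 1)) : Finset ι :=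
  ({i | i.castSucc < j} : Finset (Fin n)).map e.toEmbedding

theorem apply_mem_initialSegment {i : Fin n} {j : Fin (n + 1)} :
    e i ∈ initialSegment e j ↔ i.castSucc < j := by
  simp [initialSegment]

theorem initialSegment_zero (e : Fin n ≃ ι) : initialSegment e 0 = ∅ := by
  simp [initialSegment]

theorem initialSegment_last [Fintype ι] (e : Fin n ≃ ι) : initialSegment e (Fin.last n) = univ :=
  eq_univ_iff_forall.2 <| e.surjective.forall.2 fun i =>
    apply_mem_initialSegment.2 (Fin.castSucc_lt_last i)

theorem initialSegment_succ [DecidableEq ι] (e : Fin n ≃ ι) (i : Fin n) :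
    initialSegment e i.succ = insert (e i) (initialSegment e i.castSucc) := by
  refine Finset.ext <| e.surjective.forall.2 fun k => ?_
  rw [mem_insert, apply_mem_initialSegment, apply_mem_initialSegment, e.apply_eq_iff_eq,
    Fin.castSucc_lt_succ_iff, Fin.castSucc_lt_castSucc_iff, le_iff_eq_or_lt]

theorem exists_eq_initialSegment (hA : ∀ ⦃i k⦄, i < k → e k ∈ A → e i ∈ A) :
    ∃ j, A = initialSegment e j := by
  by_cases hall : ∀ i, e i ∈ A
  · refine ⟨Fin.last n, Finset.ext <| e.surjective.forall.2 fun i => ?_⟩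
    simp only [hall, apply_mem_initialSegment, Fin.castSucc_lt_last]
  · obtain ⟨k, hk, hfirst⟩ := wellFounded_lt.has_min {k | e k ∉ A} (not_forall.1 hall)
    refine ⟨k.castSucc, Finset.ext <| e.surjective.forall.2 fun i => ?_⟩
    rw [apply_mem_initialSegment, Fin.castSucc_lt_castSucc_iff]
    refine ⟨fun hi => lt_of_not_ge fun hki => ?_, fun hik => by_contra fun hi => hfirst i hi hik⟩
    exact hki.eq_or_lt.elim (fun h => hk (h ▸ hi)) fun h => hk (hA h hi)

theorem exists_equiv_monotone_comp [Finite ι] [Nonempty ι] (y : ι → ℝ) :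
    ∃ (N : ℕ) (e : Fin (N + 1) ≃ ι), Monotone (y ∘ e) := by
  obtain ⟨n, ⟨e⟩⟩ := Finite.exists_equiv_fin ι
  obtain ⟨N, rfl⟩ : ∃ N, n = N + 1 :=
    Nat.exists_eq_succ_of_ne_zero (Fin.pos (e (Classical.arbitrary ι))).ne'
  exact ⟨N, (Tuple.sort (y ∘ e.symm)).trans e.symm, Tuple.monotone_sort (y ∘ e.symm)⟩

/-- The sum of `f` over the first `j` elements of the enumeration `e`. -/
def prefixSum {M : Type*} [AddCommMonoid M] (e : Fin n ≃ ι) (f : ι → M) (j : Fin (n + 1)) : M :=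
  ∑ i ∈ initialSegment e j, f i

theorem prefixSum_zero {M : Type*} [AddCommMonoid M] (e : Fin n ≃ ι) (f : ι → M) :
    prefixSum e f 0 = 0 := by
  rw [prefixSum, initialSegment_zero, sum_empty]

theorem prefixSum_succ {M : Type*} [AddCommMonoid M] (e : Fin n ≃ ι) (f : ι → M) (i : Fin n) :
    prefixSum e f i.succ = prefixSum e f i.castSucc + f (e i) := by
  classical
  rw [prefixSum, initialSegment_succ, sum_insert, add_comm, prefixSum]
  exact fun h => lt_irrefl _ (apply_mem_initialSegment.1 h)

theorem mem_weightedPermutohedron_of_monotone_comp [Fintype ι] {u : ℕ → ℝ} {w : ι → ℕ}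
    (hu : StrictMono u) (hw : ∀ i, 0 < w i) (hmono : Monotone (y ∘ e))
    (hslack : ∀ j, 0 ≤ slack u w y (initialSegment e j)) (huniv : slack u w y univ = 0) :
    y ∈ weightedPermutohedron u w := by
  refine mem_weightedPermutohedron_of_forall_strict_lower hu hw (fun A hA => ?_) huniv
  obtain ⟨j, rfl⟩ := exists_eq_initialSegment (e := e) (A := A) fun i k hik hk =>
    by_contra fun hi => (hA _ hk _ hi).not_ge (hmono hik.le)
  exact hslack j

end InitialSegment

section InteriorSegment

variable {ι : Type*} {N : ℕ} {e : Fin (N + 1) ≃ ι} {y : ι → ℝ}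

theorem apply_mem_initialSegment_succ_castSucc {i : Fin (N + 1)} {j : Fin N} :
    e i ∈ initialSegment e j.succ.castSucc ↔ i ≤ j.castSucc := by
  rw [apply_mem_initialSegment, Fin.castSucc_lt_castSucc_iff, Fin.le_castSucc_iff]

theorem apply_castSucc_mem_initialSegment (e : Fin (N + 1) ≃ ι) (j : Fin N) :
    e j.castSucc ∈ initialSegment e j.succ.castSucc :=
  apply_mem_initialSegment_succ_castSucc.2 le_rfl

theorem apply_succ_notMem_initialSegment (e : Fin (N + 1) ≃ ι) (j : Fin N) :
    e j.succ ∉ initialSegment e j.succ.castSucc := fun h =>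
  j.castSucc_lt_succ.not_ge (apply_mem_initialSegment_succ_castSucc.1 h)

theorem gap_initialSegment (hmono : Monotone (y ∘ e)) (j : Fin N) :
    gap y (initialSegment e j.succ.castSucc) = y (e j.succ) - y (e j.castSucc) := by
  have : Finite ι := Finite.of_equiv _ e
  have hleft := apply_castSucc_mem_initialSegment e j
  have hright := apply_succ_notMem_initialSegment e j
  set A := initialSegment e j.succ.castSucc
  have : Nonempty (A × {k // k ∉ A}) := ⟨⟨⟨_, hleft⟩, ⟨_, hright⟩⟩⟩
  refine le_antisymm ((gap_le y hleft hright).trans_eq ?_) (le_ciInf fun ⟨⟨i, hi⟩, k, hk⟩ => ?_)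
  · exact posPart_of_nonneg (sub_nonneg.2 (hmono j.castSucc_lt_succ.le))
  · obtain ⟨i, rfl⟩ := e.surjective i
    obtain ⟨k, rfl⟩ := e.surjective k
    have hi : i ≤ j.castSucc := apply_mem_initialSegment_succ_castSucc.1 hi
    have hk : j.succ ≤ k := Fin.castSucc_lt_iff_succ_le.1
      (not_le.1 (mt apply_mem_initialSegment_succ_castSucc.2 hk))
    exact (sub_le_sub (hmono hk) (hmono hi)).trans (le_posPart _)

end InteriorSegment

section Existence

variable {ι : Type*} {N : ℕ} {u : ℕ → ℝ} {p q : ι → ℕ} {y y' : ι → ℝ} {e : Fin (N + 1) ≃ ι}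

theorem kink_partialSum_prefixSum_pos (hu : StrictMono u) (hq : ∀ i, 0 < q i) (e : Fin (N + 1) ≃ ι)
    (j : Fin N) : 0 < kink (fun i => q (e i)) (fun j => partialSum u (prefixSum e q j)) j := by
  have hchord := partialSum_chord_lt hu (prefixSum e q j.castSucc.castSucc)
    (hq (e j.castSucc)) (hq (e j.succ))
  rw [← prefixSum_succ, Fin.succ_castSucc, ← prefixSum_succ] at hchord
  exact sub_pos.2 hchord

theorem chordSlope_prefixSum (hq : ∀ i, 0 < q i) (e : Fin (N + 1) ≃ ι) (y : ι → ℝ)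
    (i : Fin (N + 1)) :
    chordSlope (fun i => q (e i)) (prefixSum e fun i => q i * y i) i = y (e i) := by
  rw [chordSlope, prefixSum_succ, add_sub_cancel_left,
    mul_div_cancel_left₀ _ (Nat.cast_pos.2 (hq _)).ne']

theorem prefixSum_chordSlope (hq : ∀ i, 0 < q i) (e : Fin (N + 1) ≃ ι) {Y : Fin (N + 2) → ℝ}
    (hY : Y 0 = 0) :
    prefixSum e (fun i => q i * chordSlope (fun i => q (e i)) Y (e.symm i)) = Y := by
  funext j
  induction j using Fin.induction with
  | zero => rw [prefixSum_zero, hY]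
  | succ i ih =>
    rw [prefixSum_succ, ih, e.symm_apply_apply, chordSlope,
      mul_div_cancel₀ _ (Nat.cast_pos.2 (hq _)).ne', add_sub_cancel]

theorem compatible_iff_forall_initialSegment (hy : Monotone (y ∘ e)) (hy' : Monotone (y' ∘ e)) :
    Compatible u p q y y' ↔ ∀ j : Fin N,
      slack u p y (initialSegment e j.succ.castSucc) * gap y' (initialSegment e j.succ.castSucc) =
        slack u q y' (initialSegment e j.succ.castSucc) *
          gap y (initialSegment e j.succ.castSucc) := by
  refine ⟨fun h j => h _, fun h A => ?_⟩
  have : Finite ι := Finite.of_equiv _ e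
  have := Fintype.ofFinite ι
  by_cases hA : ∀ ⦃i k⦄, i < k → e k ∈ A → e i ∈ A
  · obtain ⟨j, rfl⟩ := exists_eq_initialSegment hA
    induction j using Fin.lastCases with
    | last => rw [initialSegment_last, gap_univ, gap_univ, mul_zero, mul_zero]
    | cast j =>
      cases j using Fin.cases with
      | zero =>
        rw [Fin.castSucc_zero, initialSegment_zero, gap_empty, gap_empty, mul_zero, mul_zero]
      | succ j => exact h j
  · push Not at hA
    obtain ⟨i, k, hik, hk, hi⟩ := hA
    rw [gap_eq_zero_of_le hk hi (hy hik.le), gap_eq_zero_of_le hk hi (hy' hik.le), mul_zero,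
      mul_zero]

theorem compatible_iff_isBalanced [Fintype ι] (hq : ∀ i, 0 < q i) (hy : Monotone (y ∘ e))
    (hy' : Monotone (y' ∘ e)) (huniv : slack u q y' univ = 0) :
    Compatible u p q y y' ↔
      IsBalanced (fun i => q (e i)) (fun j => slack u p y (initialSegment e j.succ.castSucc))
        (fun j => gap y (initialSegment e j.succ.castSucc))
        (fun j => partialSum u (prefixSum e q j)) (prefixSum e fun i => q i * y' i) := by
  have hkink (j : Fin N) : kink (fun i => q (e i)) (prefixSum e fun i => q i * y' i) j =
      gap y' (initialSegment e j.succ.castSucc) := by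
    rw [kink, chordSlope_prefixSum hq, chordSlope_prefixSum hq, gap_initialSegment hy']
  rw [compatible_iff_forall_initialSegment hy hy']
  constructor
  · intro h
    refine ⟨?_, ?_, fun j => ?_⟩
    · rw [prefixSum_zero, prefixSum_zero, partialSum_zero]
    · rw [prefixSum, prefixSum, initialSegment_last]
      exact sub_eq_zero.1 huniv
    · rw [hkink, h j, mul_comm]
      rfl
  · intro h j
    rw [← hkink, h.mul_kink, mul_comm]
    rfl

theorem slack_add_gap_pos [Fintype ι] (hu : StrictMono u) (hp : ∀ i, 0 < p i)
    (hy : y ∈ weightedPermutohedron u p) {A : Finset ι} {i k : ι} (hi : i ∈ A) (hk : k ∉ A) :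
    0 < slack u p y A + gap y A := by
  rcases (hy.1 A).eq_or_lt with hzero | hpos
  · rw [← hzero, zero_add, gap_pos_iff hi hk]
    exact fun l hl m hm => lt_of_slack_eq_zero hu hp hy hzero.symm hl hm
  · exact add_pos_of_pos_of_nonneg hpos (gap_nonneg y A)

theorem slack_add_gap_initialSegment_pos [Fintype ι] (hu : StrictMono u) (hp : ∀ i, 0 < p i)
    (hy : y ∈ weightedPermutohedron u p) (e : Fin (N + 1) ≃ ι) (j : Fin N) :
    0 < slack u p y (initialSegment e j.succ.castSucc) +
      gap y (initialSegment e j.succ.castSucc) :=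
  slack_add_gap_pos hu hp hy (apply_castSucc_mem_initialSegment e j)
    (apply_succ_notMem_initialSegment e j)

theorem exists_compatible [Fintype ι] [Nonempty ι] (hu : StrictMono u) (hp : ∀ i, 0 < p i)
    (hq : ∀ i, 0 < q i) (hy : y ∈ weightedPermutohedron u p) :
    ∃ y' ∈ weightedPermutohedron u q, Compatible u p q y y' := by
  obtain ⟨N, e, hmono⟩ := exists_equiv_monotone_comp y
  have hq' (i : Fin (N + 1)) : (0 : ℝ) < q (e i) := Nat.cast_pos.2 (hq _)
  have hα (j : Fin N) := hy.1 (initialSegment e j.succ.castSucc)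
  have hβ (j : Fin N) := gap_nonneg y (initialSegment e j.succ.castSucc)
  have hαβ := slack_add_gap_initialSegment_pos hu hp hy e
  have hΦ := kink_partialSum_prefixSum_pos hu hq e
  obtain ⟨Y, hY⟩ := IsBalanced.exists_isBalanced hq' hα hβ hαβ
    fun j => partialSum u (prefixSum e q j)
  set y' : ι → ℝ := fun i => chordSlope (fun i => q (e i)) Y (e.symm i) with hy'
  have hprefix : prefixSum e (fun i => q i * y' i) = Y :=
    prefixSum_chordSlope hq e (hY.zero.trans (by rw [prefixSum_zero, partialSum_zero]))
  have hmono' : Monotone (y' ∘ e) := Fin.monotone_iff_le_succ.2 fun j => by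
    simp only [hy', Function.comp_apply, e.symm_apply_apply]
    exact sub_nonneg.1 (hY.kink_nonneg hq' hα hβ hαβ hΦ j)
  have hslack (j : Fin (N + 2)) : slack u q y' (initialSegment e j) =
      Y j - partialSum u (prefixSum e q j) := by
    rw [← hprefix]
    rfl
  have huniv : slack u q y' univ = 0 := by
    rw [← initialSegment_last e, hslack, hY.last, sub_self]
  refine ⟨y', mem_weightedPermutohedron_of_monotone_comp hu hq hmono' (fun j => ?_) huniv, ?_⟩
  · rw [hslack]
    exact sub_nonneg.2 (hY.obstacle_le hq' hα hβ hαβ hΦ j)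
  · rw [compatible_iff_isBalanced hq hmono hmono' huniv, hprefix]
    exact hY

theorem Compatible.unique [Fintype ι] [Nonempty ι] (hu : StrictMono u) (hp : ∀ i, 0 < p i)
    (hq : ∀ i, 0 < q i) (hy : y ∈ weightedPermutohedron u p)
    (hy' : y' ∈ weightedPermutohedron u q) {z : ι → ℝ} (hz : z ∈ weightedPermutohedron u q)
    (hcompat : Compatible u p q y y') (hcompat' : Compatible u p q y z) : y' = z := by
  obtain ⟨N, e, hmono⟩ := exists_equiv_monotone_comp y
  have hbalanced {x : ι → ℝ} (hx : x ∈ weightedPermutohedron u q) (h : Compatible u p q y x) :=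
    (compatible_iff_isBalanced hq hmono (fun _ _ hik => h.le hu hp hy (hmono hik)) hx.2).1 h
  have hprefix := (hbalanced hy' hcompat).unique (fun i => Nat.cast_pos.2 (hq (e i)))
    (fun j => hy.1 _) (fun j => gap_nonneg y _) (slack_add_gap_initialSegment_pos hu hp hy e)
    (hbalanced hz hcompat')
  refine funext <| e.surjective.forall.2 fun i => ?_
  rw [← chordSlope_prefixSum hq e y', hprefix, chordSlope_prefixSum hq]

end Existence

section Homeomorph

-- Both projections of the graph of `R` are continuous bijections from a compact space to a
-- Hausdorff one.
theorem exists_homeomorph_of_isClosed_of_existsUnique {X Y : Type*} [TopologicalSpace X]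
    [TopologicalSpace Y] [CompactSpace X] [CompactSpace Y] [T2Space X] [T2Space Y]
    {R : X → Y → Prop} (hR : IsClosed {z : X × Y | R z.1 z.2}) (hX : ∀ x, ∃! y, R x y)
    (hY : ∀ y, ∃! x, R x y) : ∃ φ : X ≃ₜ Y, ∀ x, R x (φ x) := by
  let G := {z : X × Y // R z.1 z.2}
  have : CompactSpace G := isCompact_iff_compactSpace.1 hR.isCompact
  have hfst : IsHomeomorph fun z : G => z.1.1 := by
    refine isHomeomorph_iff_continuous_bijective.2 ⟨by fun_prop, ?_, fun x => ?_⟩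
    · rintro ⟨⟨x, y⟩, h⟩ ⟨⟨x', y'⟩, h'⟩ (rfl : x = x')
      exact Subtype.ext (Prod.ext rfl ((hX x).unique h h'))
    · obtain ⟨y, hy⟩ := (hX x).exists
      exact ⟨⟨(x, y), hy⟩, rfl⟩
  have hsnd : IsHomeomorph fun z : G => z.1.2 := by
    refine isHomeomorph_iff_continuous_bijective.2 ⟨by fun_prop, ?_, fun y => ?_⟩
    · rintro ⟨⟨x, y⟩, h⟩ ⟨⟨x', y'⟩, h'⟩ (rfl : y = y')
      exact Subtype.ext (Prod.ext ((hY y).unique h h') rfl)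
    · obtain ⟨x, hx⟩ := (hY y).exists
      exact ⟨⟨(x, y), hx⟩, rfl⟩
  refine ⟨(hfst.homeomorph _).symm.trans (hsnd.homeomorph _), fun x => ?_⟩
  have hx : ((hfst.homeomorph _).symm x).1.1 = x := (hfst.homeomorph _).apply_symm_apply x
  have hgraph := ((hfst.homeomorph _).symm x).2
  rw [hx] at hgraph
  exact hgraph

theorem exists_homeomorph_weightedPermutohedron {ι : Type*} [Fintype ι] [Nonempty ι] {u : ℕ → ℝ}
    (hu : StrictMono u) {p q : ι → ℕ} (hp : ∀ i, 0 < p i) (hq : ∀ i, 0 < q i) :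
    ∃ φ : weightedPermutohedron u p ≃ₜ weightedPermutohedron u q,
      ∀ (y : weightedPermutohedron u p) A, slack u p y A = 0 ↔ slack u q (φ y) A = 0 := by
  have := isCompact_iff_compactSpace.1 (isCompact_weightedPermutohedron (u := u) hp)
  have := isCompact_iff_compactSpace.1 (isCompact_weightedPermutohedron (u := u) hq)
  obtain ⟨φ, hφ⟩ := exists_homeomorph_of_isClosed_of_existsUnique
    (X := weightedPermutohedron u p) (Y := weightedPermutohedron u q)
    (R := fun y y' => Compatible u p q y y')
    ((isClosed_setOf_compatible u p q).preimage
      (continuous_subtype_val.prodMap continuous_subtype_val))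
    (fun y => by
      obtain ⟨y', hy', hcompat⟩ := exists_compatible hu hp hq y.2
      exact ⟨⟨y', hy'⟩, hcompat, fun z hz =>
        Subtype.ext (Compatible.unique hu hp hq y.2 z.2 hy' hz hcompat)⟩)
    (fun y => by
      obtain ⟨y', hy', hcompat⟩ := exists_compatible hu hq hp y.2
      exact ⟨⟨y', hy'⟩, hcompat.symm, fun z hz =>
        Subtype.ext (Compatible.unique hu hq hp y.2 z.2 hy' hz.symm hcompat)⟩)
  exact ⟨φ, fun y A => ⟨(hφ y).slack_eq_zero hu hp y.2 (φ y).2,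
    (hφ y).symm.slack_eq_zero hu hq (φ y).2 y.2⟩⟩

end Homeomorph

section Rado

theorem sum_by_parts_fin {N : ℕ} (c : Fin (N + 1) → ℝ) (Y : Fin (N + 2) → ℝ) :
    ∑ i, c i * (Y i.succ - Y i.castSucc) =
      c (Fin.last N) * Y (Fin.last _) - c 0 * Y 0 -
        ∑ j : Fin N, (c j.succ - c j.castSucc) * Y j.succ.castSucc := by
  have hright := Fin.sum_univ_castSucc fun i => c i * Y i.succ
  have hleft := Fin.sum_univ_succ fun i => c i * Y i.castSucc
  simp only [mul_sub, sub_mul, sum_sub_distrib, hright, hleft, Fin.succ_last, Fin.castSucc_zero,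
    Fin.succ_castSucc]
  ring

theorem prefixSum_perm_symm {N : ℕ} (σ : Equiv.Perm (Fin N)) (u : ℕ → ℝ) (j : Fin (N + 1)) :
    prefixSum σ (fun i => u (σ.symm i)) j = partialSum u j := by
  induction j using Fin.induction with
  | zero => rw [prefixSum_zero, Fin.val_zero, partialSum_zero]
  | succ i ih =>
    rw [prefixSum_succ, ih, σ.symm_apply_apply, Fin.val_succ, partialSum_succ, Fin.val_castSucc]

theorem prefixSum_one {ι : Type*} {n : ℕ} (e : Fin n ≃ ι) (j : Fin (n + 1)) :
    prefixSum e (1 : ι → ℕ) j = j := by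
  induction j using Fin.induction with
  | zero => exact prefixSum_zero _ _
  | succ i ih => rw [prefixSum_succ, ih, Fin.val_succ, Fin.val_castSucc, Pi.one_apply]

theorem slack_one_initialSegment {ι : Type*} {n : ℕ} (u : ℕ → ℝ) (y : ι → ℝ) (e : Fin n ≃ ι)
    (j : Fin (n + 1)) :
    slack u 1 y (initialSegment e j) = prefixSum e y j - partialSum u j := by
  rw [← prefixSum_one e j]
  simp [slack, prefixSum]

theorem permutohedron_subset_weightedPermutohedron {N : ℕ} {u : ℕ → ℝ} (hu : StrictMono u) :
    permutohedron N u ⊆ weightedPermutohedron u 1 := by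
  refine convexHull_min ?_ (convex_weightedPermutohedron u 1)
  rintro x ⟨σ, hσ⟩
  obtain rfl : x = fun i => u (σ i) := funext hσ
  have hslack (j : Fin (N + 1)) :
      slack u 1 (fun i => u (σ i)) (initialSegment σ.symm j) = 0 := by
    rw [slack_one_initialSegment, sub_eq_zero]
    exact prefixSum_perm_symm σ.symm u j
  refine mem_weightedPermutohedron_of_monotone_comp (e := σ.symm) hu (fun _ => one_pos) ?_
    (fun j => (hslack j).ge) ?_
  · intro i k hik
    simpa using hu.monotone hik
  · rw [← initialSegment_last σ.symm]
    exact hslack _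

-- The vertex sorted in the same way as `c` maximizes `c` on the whole polytope, by summation by
-- parts.
theorem exists_perm_sum_mul_le {N : ℕ} {u : ℕ → ℝ} {y : Fin N → ℝ}
    (hy : y ∈ weightedPermutohedron u 1) (c : Fin N → ℝ) :
    ∃ σ : Equiv.Perm (Fin N), ∑ i, c i * y i ≤ ∑ i, c i * u (σ i) := by
  rcases N with _ | N
  · exact ⟨1, by simp⟩
  set e := Tuple.sort c
  have hc : Monotone (c ∘ e) := Tuple.monotone_sort c
  let Y (j : Fin (N + 2)) : ℝ := slack u 1 y (initialSegment e j)
  have hstep (i : Fin (N + 1)) : y (e i) - u i = Y i.succ - Y i.castSucc := by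
    simp only [Y, slack_one_initialSegment, prefixSum_succ, Fin.val_succ, Fin.val_castSucc,
      partialSum_succ]
    ring
  have hzero : Y 0 = 0 := by rw [← slack_empty u 1 y, ← initialSegment_zero e]
  have hlast : Y (Fin.last _) = 0 := by rw [← hy.2, ← initialSegment_last e]
  refine ⟨e.symm, sub_nonpos.1 ?_⟩
  calc ∑ i, c i * y i - ∑ i, c i * u (e.symm i)
      = ∑ i, c (e i) * (Y i.succ - Y i.castSucc) := by
        rw [← sum_sub_distrib, ← Equiv.sum_comp e]
        simp only [← mul_sub, e.symm_apply_apply, hstep]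
    _ = -∑ j : Fin N, (c (e j.succ) - c (e j.castSucc)) * Y j.succ.castSucc := by
        rw [sum_by_parts_fin (fun i => c (e i)), hzero, hlast]
        ring
    _ ≤ 0 := neg_nonpos.2 <| sum_nonneg fun j _ =>
        mul_nonneg (sub_nonneg.2 (hc j.castSucc_lt_succ.le)) (hy.1 _)

theorem permutohedron_eq_weightedPermutohedron {N : ℕ} {u : ℕ → ℝ} (hu : StrictMono u) :
    permutohedron N u = weightedPermutohedron u 1 := by
  refine (permutohedron_subset_weightedPermutohedron hu).antisymm fun y hy => ?_
  by_contra hout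
  have hconvex : Convex ℝ (permutohedron N u) := convex_convexHull ℝ _
  have hclosed : IsClosed (permutohedron N u) := by
    have hfinite : {x : Fin N → ℝ | ∃ σ : Equiv.Perm (Fin N), ∀ i, x i = u (σ i)}.Finite :=
      (Set.finite_range fun (σ : Equiv.Perm (Fin N)) i => u (σ i)).subset
        fun x ⟨σ, hσ⟩ => ⟨σ, (funext hσ).symm⟩
    exact (hfinite.isCompact_convexHull (𝕜 := ℝ)).isClosed
  obtain ⟨f, m, hf, hm⟩ := geometric_hahn_banach_closed_point hconvex hclosed hout
  have hsum (x : Fin N → ℝ) : f x = ∑ i, f (fun k => if i = k then 1 else 0) * x i := by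
    exact (f.toLinearMap.pi_apply_eq_sum_univ x).trans (sum_congr rfl fun _ _ => mul_comm _ _)
  obtain ⟨σ, hσ⟩ := exists_perm_sum_mul_le hy fun i => f fun k => if i = k then 1 else 0
  rw [← hsum, ← hsum fun i => u (σ i)] at hσ
  exact (hm.trans_le hσ).not_gt (hf _ (subset_convexHull ℝ _ ⟨σ, fun _ => rfl⟩))

end Rado

section Slice

variable {r : ℕ} {u : ℕ → ℝ}

/-- The retraction of `Fin (r + 2)` onto the complement of `b`, identified with `Fin (r + 1)` by
`b.succAbove`, which sends `b` to `a`. -/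
def mergeIdx (b : Fin (r + 2)) (a : Fin (r + 1)) : Fin (r + 2) → Fin (r + 1) :=
  b.insertNth a id

theorem mergeIdx_self (b : Fin (r + 2)) (a : Fin (r + 1)) : mergeIdx b a b = a :=
  Fin.insertNth_apply_same ..

theorem mergeIdx_succAbove (b : Fin (r + 2)) (a i : Fin (r + 1)) :
    mergeIdx b a (b.succAbove i) = i :=
  Fin.insertNth_apply_succAbove ..

theorem comp_succAbove_comp_mergeIdx {b : Fin (r + 2)} {a : Fin (r + 1)} {x : Fin (r + 2) → ℝ}
    (hx : x (b.succAbove a) = x b) : (x ∘ b.succAbove) ∘ mergeIdx b a = x := by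
  funext k
  induction k using b.succAboveCases with
  | x => rw [Function.comp_apply, mergeIdx_self, Function.comp_apply, hx]
  | p i => rw [Function.comp_apply, mergeIdx_succAbove, Function.comp_apply]

theorem fiberWeight_mergeIdx_pos (b : Fin (r + 2)) (a i : Fin (r + 1)) :
    0 < fiberWeight 1 (mergeIdx b a) i :=
  sum_pos (fun _ _ => one_pos)
    ⟨b.succAbove i, (mem_filter_univ _).2 (mergeIdx_succAbove b a i)⟩

theorem comp_succAbove_mem_weightedPermutohedron (hu : StrictMono u) {b : Fin (r + 2)}
    {a : Fin (r + 1)} {x : Fin (r + 2) → ℝ}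
    (hx : x ∈ weightedPermutohedron u 1 ∩ {x | x (b.succAbove a) = x b}) :
    x ∘ b.succAbove ∈ weightedPermutohedron u (fiberWeight 1 (mergeIdx b a)) := by
  rw [← comp_mem_weightedPermutohedron_iff hu (w := 1) (fun _ => one_pos),
    comp_succAbove_comp_mergeIdx hx.2]
  exact hx.1

/-- The section of the weighted permutohedron by `x (b.succAbove a) = x b`, in the coordinates
other than `b`. -/
def sliceHomeomorph (hu : StrictMono u) (b : Fin (r + 2)) (a : Fin (r + 1)) :
    ↥(weightedPermutohedron u 1 ∩ {x : Fin (r + 2) → ℝ | x (b.succAbove a) = x b}) ≃ₜ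
      weightedPermutohedron u (fiberWeight 1 (mergeIdx b a)) where
  toFun x := ⟨x.1 ∘ b.succAbove, comp_succAbove_mem_weightedPermutohedron hu x.2⟩
  invFun y := ⟨y.1 ∘ mergeIdx b a,
    (comp_mem_weightedPermutohedron_iff hu fun _ => one_pos).2 y.2,
    congrArg y.1 ((mergeIdx_succAbove b a a).trans (mergeIdx_self b a).symm)⟩
  left_inv x := Subtype.ext (comp_succAbove_comp_mergeIdx x.2.2)
  right_inv y := Subtype.ext <| funext fun i => congrArg y.1 (mergeIdx_succAbove b a i)
  continuous_toFun :=
    ((Pi.continuous_precomp b.succAbove).comp continuous_subtype_val).subtype_mk _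
  continuous_invFun :=
    ((Pi.continuous_precomp (mergeIdx b a)).comp continuous_subtype_val).subtype_mk _

end Slice

section Faces

/-- The union `P_1 ∪ ⋯ ∪ P_j` of the first blocks, up to and including the block of index `j`. -/
def blockUnion {n k : ℕ} (Q : Fin (k + 1) → Finset (Fin n)) (j : Fin (k + 1)) : Finset (Fin n) :=
  ({j' | j' ≤ j} : Finset (Fin (k + 1))).biUnion Q

theorem mem_blockUnion {n k : ℕ} {Q : Fin (k + 1) → Finset (Fin n)} {j : Fin (k + 1)} {i : Fin n} :
    i ∈ blockUnion Q j ↔ ∃ j' ≤ j, i ∈ Q j' := by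
  simp [blockUnion]

theorem mem_partitionFace_iff {n k : ℕ} {u : ℕ → ℝ} {Q : Fin (k + 1) → Finset (Fin n)}
    (hQ : Pairwise fun j j' => Disjoint (Q j) (Q j')) {x : Fin n → ℝ} :
    x ∈ partitionFace u Q ↔
      x ∈ permutohedron n u ∧ ∀ j, slack u 1 x (blockUnion Q j) = 0 := by
  have hcard (j : Fin (k + 1)) : (blockUnion Q j).card = ∑ j' with j' ≤ j, (Q j').card :=
    card_biUnion fun _ _ _ _ h => hQ h
  simp only [partitionFace, Set.mem_inter_iff, Set.mem_iInter, Set.mem_ofPred_eq, slack,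
    Pi.one_apply, Nat.cast_one, one_mul, sub_eq_zero, sum_const, smul_eq_mul, mul_one, hcard]
  rfl

theorem reduceIdx_succAbove {r : ℕ} (b : Fin (r + 2)) (i : Fin (r + 1)) :
    reduceIdx b (b.succAbove i) = i := by
  ext
  simp only [reduceIdx, Fin.succAbove, Fin.lt_def]
  by_cases h : (i : ℕ) < b
  · simp [h]
  · have h' : ¬(i : ℕ) + 1 < b := by omega
    simp [h, h']

theorem mem_reducePartition {r k : ℕ} {b : Fin (r + 2)} {Q : Fin (k + 1) → Finset (Fin (r + 2))}
    {j : Fin (k + 1)} {i : Fin (r + 1)} : i ∈ reducePartition b Q j ↔ b.succAbove i ∈ Q j := by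
  simp only [reducePartition, mem_image, mem_erase]
  constructor
  · rintro ⟨x, ⟨hb, hx⟩, rfl⟩
    obtain ⟨i, rfl⟩ := Fin.exists_succAbove_eq hb
    rwa [reduceIdx_succAbove]
  · exact fun h => ⟨_, ⟨Fin.succAbove_ne b i, h⟩, reduceIdx_succAbove b i⟩

theorem pairwise_disjoint_reducePartition {r k : ℕ} {Q : Fin (k + 1) → Finset (Fin (r + 2))}
    (hQ : Pairwise fun j j' => Disjoint (Q j) (Q j')) (b : Fin (r + 2)) :
    Pairwise fun j j' => Disjoint (reducePartition b Q j) (reducePartition b Q j') :=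
  fun _ _ hne => disjoint_left.2 fun _ hi hi' =>
    disjoint_left.1 (hQ hne) (mem_reducePartition.1 hi) (mem_reducePartition.1 hi')

theorem filter_mergeIdx_mem_blockUnion {r k : ℕ} {Q : Fin (k + 1) → Finset (Fin (r + 2))}
    (hQ : Pairwise fun j j' => Disjoint (Q j) (Q j')) {b : Fin (r + 2)} {a : Fin (r + 1)}
    (hab : ∃ j, b.succAbove a ∈ Q j ∧ b ∈ Q j) (j : Fin (k + 1)) :
    ({i | mergeIdx b a i ∈ blockUnion (reducePartition b Q) j} : Finset _) = blockUnion Q j := by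
  obtain ⟨l, ha, hb⟩ := hab
  have hsame {c : Fin (r + 2)} (hc : c ∈ Q l) {j' : Fin (k + 1)} : c ∈ Q j' ↔ j' = l :=
    ⟨fun h => by_contra fun hne => disjoint_left.1 (hQ hne) h hc, fun h => h ▸ hc⟩
  ext i
  simp only [mem_filter_univ, mem_blockUnion, mem_reducePartition]
  induction i using b.succAboveCases with
  | x => simp only [mergeIdx_self, hsame ha, hsame hb]
  | p i => rw [mergeIdx_succAbove]

theorem partitionFace_inter_eq_empty {n k : ℕ} {u : ℕ → ℝ} (hu : StrictMono u)
    {Q : Fin (k + 1) → Finset (Fin n)} (hQ : IsOrderedPartition Q) {a b : Fin n}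
    (hab : ∀ j, ¬(a ∈ Q j ∧ b ∈ Q j)) : partitionFace u Q ∩ {x | x a = x b} = ∅ := by
  have hcover (c : Fin n) : ∃ j, c ∈ Q j := by
    simpa using hQ.2.2.ge (mem_univ c)
  have hlt {c d : Fin n} {j l : Fin (k + 1)} (hc : c ∈ Q j) (hd : d ∈ Q l) (hjl : j < l)
      {x : Fin n → ℝ} (hx : x ∈ partitionFace u Q) : x c < x d := by
    rw [mem_partitionFace_iff hQ.2.1, permutohedron_eq_weightedPermutohedron hu] at hx
    refine lt_of_slack_eq_zero hu (fun _ => one_pos) hx.1 (hx.2 j)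
      (mem_blockUnion.2 ⟨j, le_rfl, hc⟩) fun hmem => ?_
    obtain ⟨j', hj', hd'⟩ := mem_blockUnion.1 hmem
    exact disjoint_left.1 (hQ.2.1 j' l (hj'.trans_lt hjl).ne) hd' hd
  obtain ⟨j, ha⟩ := hcover a
  obtain ⟨l, hb⟩ := hcover b
  refine Set.eq_empty_iff_forall_notMem.2 fun x ⟨hx, heq⟩ => ?_
  rcases lt_trichotomy j l with hjl | rfl | hlj
  · exact (hlt ha hb hjl hx).ne heq
  · exact hab j ⟨ha, hb⟩
  · exact (hlt hb ha hlj hx).ne' heq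

end Faces

theorem permutohedron_inter_hyperplane_general (r : ℕ) (s : ℕ → ℝ) (hs : StrictMono s)
    (a b : Fin (r + 2)) (hab : a ≠ b) :
    ∃ ψ : ↥(permutohedron (r + 2) s ∩ {x : Fin (r + 2) → ℝ | x a = x b}) ≃ₜ
        ↥(permutohedron (r + 1) s),
      (∀ (k : ℕ) (Q : Fin (k + 1) → Finset (Fin (r + 2))), IsOrderedPartition Q →
        (∀ j, ¬(a ∈ Q j ∧ b ∈ Q j)) →
        partitionFace s Q ∩ {x : Fin (r + 2) → ℝ | x a = x b} = ∅) ∧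
      (∀ (k : ℕ) (Q : Fin (k + 1) → Finset (Fin (r + 2))), IsOrderedPartition Q →
        (∃ j, a ∈ Q j ∧ b ∈ Q j) →
        ∀ x : ↥(permutohedron (r + 2) s ∩ {x : Fin (r + 2) → ℝ | x a = x b}),
          (x : Fin (r + 2) → ℝ) ∈ partitionFace s Q ↔
            (ψ x : Fin (r + 1) → ℝ) ∈ partitionFace s (reducePartition b Q)) := by
  obtain ⟨a, rfl⟩ := Fin.exists_succAbove_eq hab
  rw [permutohedron_eq_weightedPermutohedron hs, permutohedron_eq_weightedPermutohedron hs]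
  obtain ⟨φ, hφ⟩ := exists_homeomorph_weightedPermutohedron hs (fiberWeight_mergeIdx_pos b a)
    (q := 1) fun _ => one_pos
  refine ⟨(sliceHomeomorph hs b a).trans φ, fun k Q hQ => partitionFace_inter_eq_empty hs hQ,
    fun k Q hQ hblock x => ?_⟩
  have hdisjoint : Pairwise fun j j' => Disjoint (Q j) (Q j') := hQ.2.1
  have hslack (j : Fin (k + 1)) : slack s 1 x (blockUnion Q j) = 0 ↔
      slack s 1 (φ (sliceHomeomorph hs b a x)) (blockUnion (reducePartition b Q) j) = 0 := by
    rw [← hφ, ← filter_mergeIdx_mem_blockUnion hdisjoint hblock,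
      ← comp_succAbove_comp_mergeIdx x.2.2, slack_comp_preimage]
    rfl
  rw [mem_partitionFace_iff hdisjoint,
    mem_partitionFace_iff (pairwise_disjoint_reducePartition hdisjoint b),
    permutohedron_eq_weightedPermutohedron hs, permutohedron_eq_weightedPermutohedron hs]
  exact and_congr (iff_of_true x.2.1 (φ _).2) (forall_congr' hslack)

/-- For a strictly increasing sequence of positive integers `s_1 < ⋯ < s_r`
with `r ≥ 2` (here the ambient dimension is `r+2`), and `a ≠ b`, there is a homeomorphism `ψ`
from `Π_S ∩ {x_a = x_b}` onto `Π_{(s_1,…,s_{r-1})}` such that: (i) faces of ordered partitions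
separating `a` and `b` miss the hyperplane `{x_a = x_b}`; (ii) if `a, b` lie in a common block,
`ψ` carries `Π_𝔭 ∩ {x_a = x_b}` exactly onto the face of the smaller permutohedron
associated to the `b`-reduction `𝔭'` of `𝔭` (hence homeomorphically, `ψ` being a
homeomorphism). -/
theorem permutohedron_inter_hyperplane (r : ℕ) (s : ℕ → ℕ)
    (hmono : StrictMono s) (hpos : ∀ i, 0 < s i)
    (a b : Fin (r + 2)) (hab : a ≠ b) :
    ∃ ψ : ↥(permutohedron (r + 2) (fun i => (s i : ℝ)) ∩
            {x : Fin (r + 2) → ℝ | x a = x b}) ≃ₜ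
          ↥(permutohedron (r + 1) (fun i => (s i : ℝ))),
      (∀ (k : ℕ) (Q : Fin (k + 1) → Finset (Fin (r + 2))), IsOrderedPartition Q →
        (∀ j, ¬(a ∈ Q j ∧ b ∈ Q j)) →
        partitionFace (fun i => (s i : ℝ)) Q ∩ {x : Fin (r + 2) → ℝ | x a = x b} = ∅) ∧
      (∀ (k : ℕ) (Q : Fin (k + 1) → Finset (Fin (r + 2))), IsOrderedPartition Q →
        (∃ j, a ∈ Q j ∧ b ∈ Q j) →
        ∀ x : ↥(permutohedron (r + 2) (fun i => (s i : ℝ)) ∩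
            {x : Fin (r + 2) → ℝ | x a = x b}),
          (x : Fin (r + 2) → ℝ) ∈ partitionFace (fun i => (s i : ℝ)) Q ↔
            (ψ x : Fin (r + 1) → ℝ) ∈
              partitionFace (fun i => (s i : ℝ)) (reducePartition b Q)) := by
  exact permutohedron_inter_hyperplane_general r _ (Nat.strictMono_cast.comp hmono) a b hab
end

section
/- Let S = (s_1 < ⋯ < s_r) be a strictly increasing sequence of positive integers. Let A_1,…,A_w ⊆ {1,…,r} be pairwise disjoint subsets with |A_j| = k_j, and let H = {x ∈ ℝ^r : x_i = x_{i'} whenever i and i' lie in the same set A_j}. Set K = ∑_{j=1}^{w} (k_j − 1). Then the intersection Π_S ∩ H is homeomorphic to the permutohedron Π_{(s_1,…,s_{r−K})} ⊂ ℝ^{r−K}; in particular Π_S ∩ H is nonempty. -/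
/-!
Two nonempty compact convex sets of equal dimension are homeomorphic, so only dimensions have to be
compared. The direction of `Π_S` is the hyperplane of vectors with coordinate sum `0`. The centroid
of the vertices of `Π_S` has all its coordinates equal, hence lies on `H`; being relatively interior
to `Π_S`, it forces `Π_S ∩ H` to have direction `H ∩ {∑ xᵢ = 0}`. Since `H` identifies the indices
in `r - K` classes, it has dimension `r - K`, so `Π_S ∩ H` and the permutohedron in `ℝ^(r-K)` both
have dimension `r - K - 1`.
-/

open Module Set
open scoped Function

section CompactConvex

variable {E F : Type*} [NormedAddCommGroup E] [NormedSpace ℝ E] [NormedAddCommGroup F]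
  [NormedSpace ℝ F]

theorem nonempty_homeomorph_closedBall_of_nonempty_interior {P : Set E} (hcomp : IsCompact P)
    (hconv : Convex ℝ P) (hinterior : (interior P).Nonempty) :
    Nonempty (P ≃ₜ Metric.closedBall (0 : E) 1) := by
  obtain ⟨h, -, himage, -⟩ :=
    exists_homeomorph_image_interior_closure_frontier_eq_unitBall hconv hinterior hcomp.isBounded
  rw [hcomp.isClosed.closure_eq] at himage
  exact ⟨(h.image P).trans (.setCongr himage)⟩

variable [FiniteDimensional ℝ E]

theorem nonempty_homeomorph_closedBall_of_finrank_vectorSpan_eq {P : Set E} {d : ℕ}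
    (hcomp : IsCompact P) (hconv : Convex ℝ P) (hne : P.Nonempty)
    (hd : finrank ℝ (vectorSpan ℝ P) = d) :
    Nonempty (P ≃ₜ Metric.closedBall (0 : EuclideanSpace ℝ (Fin d)) 1) := by
  have := hne.to_subtype
  have hinterior := hne.intrinsicInterior hconv
  rw [intrinsicInterior, image_nonempty] at hinterior
  have p : affineSpan ℝ P := hinterior.some
  let L : EuclideanSpace ℝ (Fin d) ≃L[ℝ] (affineSpan ℝ P).direction :=
    .ofFinrankEq (by rw [finrank_euclideanSpace_fin, direction_affineSpan, hd])
  let f : EuclideanSpace ℝ (Fin d) ≃ᴬ[ℝ] affineSpan ℝ P :=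
    L.toContinuousAffineEquiv.trans (AffineIsometryEquiv.vaddConst ℝ p).toContinuousAffineEquiv
  let g : EuclideanSpace ℝ (Fin d) →ᵃ[ℝ] E :=
    (affineSpan ℝ P).subtype.comp f.toAffineEquiv.toAffineMap
  have hg : Topology.IsEmbedding g :=
    Topology.IsEmbedding.subtypeVal.comp f.toHomeomorph.isEmbedding
  have hrange : P ⊆ range g := fun x hx =>
    ⟨f.symm ⟨x, subset_affineSpan ℝ P hx⟩, by simp [g]⟩
  have hpre : (interior (g ⁻¹' P)).Nonempty := by
    have := hinterior.preimage f.toHomeomorph.surjective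
    rwa [f.toHomeomorph.preimage_interior] at this
  obtain ⟨e⟩ := nonempty_homeomorph_closedBall_of_nonempty_interior
    ((hg.isInducing.isCompact_preimage_iff hrange).2 hcomp) (hconv.affine_preimage g) hpre
  exact ⟨((hg.homeomorphImage _).trans (.setCongr (image_preimage_eq_of_subset hrange))).symm.trans
    e⟩

variable [FiniteDimensional ℝ F]

theorem nonempty_homeomorph_of_finrank_vectorSpan_eq {P : Set E} {Q : Set F}
    (hP : IsCompact P) (hPconv : Convex ℝ P) (hPne : P.Nonempty)
    (hQ : IsCompact Q) (hQconv : Convex ℝ Q) (hQne : Q.Nonempty)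
    (h : finrank ℝ (vectorSpan ℝ P) = finrank ℝ (vectorSpan ℝ Q)) : Nonempty (P ≃ₜ Q) := by
  obtain ⟨e⟩ := nonempty_homeomorph_closedBall_of_finrank_vectorSpan_eq hP hPconv hPne h
  obtain ⟨e'⟩ := nonempty_homeomorph_closedBall_of_finrank_vectorSpan_eq hQ hQconv hQne rfl
  exact ⟨e.trans e'.symm⟩

end CompactConvex

section Centroid

variable {ι E : Type*} [Fintype ι] [Nonempty ι] [AddCommGroup E] [Module ℝ E]

theorem centroid_univ_mem_convexHull_range (p : ι → E) :
    Finset.univ.centroid ℝ p ∈ convexHull ℝ (range p) :=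
  affineCombination_mem_convexHull (fun i _ => by simp [Finset.centroidWeights_apply])
    (Finset.sum_centroidWeights_eq_one_of_nonempty _ _ Finset.univ_nonempty)

theorem exists_lineMap_centroid_mem_convexHull {p : ι → E} {x : E}
    (hx : x ∈ affineSpan ℝ (range p)) :
    ∃ t : ℝ, 0 < t ∧
      AffineMap.lineMap (Finset.univ.centroid ℝ p) x t ∈ convexHull ℝ (range p) := by
  obtain ⟨w, hw, rfl⟩ := eq_affineCombination_of_mem_affineSpan_of_fintype hx
  let c : ι → ℝ := Finset.univ.centroidWeights ℝ
  have hc : ∑ i, c i = 1 := Finset.sum_centroidWeights_eq_one_of_nonempty _ _ Finset.univ_nonempty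
  -- The weights of the centroid are all positive, and stay so when moving slightly towards `x`.
  have hpos : ∀ᶠ t : ℝ in nhdsWithin 0 (Ioi 0), ∀ i, 0 < AffineMap.lineMap (c i) (w i) t := by
    refine Filter.Eventually.filter_mono nhdsWithin_le_nhds (Filter.eventually_all.2 fun i => ?_)
    refine (AffineMap.lineMap_continuous (p := c i) (q := w i)).continuousAt.eventually_const_lt ?_
    rw [AffineMap.lineMap_apply_zero]
    exact inv_pos.2 (by exact_mod_cast Finset.card_pos.2 Finset.univ_nonempty)
  obtain ⟨t, hwt, ht⟩ := (hpos.and self_mem_nhdsWithin).exists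
  refine ⟨t, ht, ?_⟩
  rw [Finset.centroid_def, Finset.lineMap_affineCombination]
  refine affineCombination_mem_convexHull (fun i _ => ?_) ?_
  · rw [AffineMap.pi_lineMap_apply]
    exact (hwt i).le
  · simp only [AffineMap.lineMap_apply_module, Pi.add_apply, Pi.smul_apply, smul_eq_mul,
      Finset.sum_add_distrib, ← Finset.mul_sum]
    rw [hc, hw, mul_one, mul_one, sub_add_cancel]

theorem vectorSpan_convexHull_inter_of_centroid_mem {p : ι → E} {Q : AffineSubspace ℝ E}
    (hQ : Finset.univ.centroid ℝ p ∈ Q) :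
    vectorSpan ℝ (convexHull ℝ (range p) ∩ Q) = Q.direction ⊓ vectorSpan ℝ (range p) := by
  set c := Finset.univ.centroid ℝ p
  apply le_antisymm
  · refine le_inf (vectorSpan_mono ℝ inter_subset_right) ?_
    rw [← direction_affineSpan ℝ (range p), ← affineSpan_convexHull, direction_affineSpan]
    exact vectorSpan_mono ℝ inter_subset_left
  · rintro v ⟨hvQ, hvp⟩
    have hc : c ∈ convexHull ℝ (range p) := centroid_univ_mem_convexHull_range p
    have hcv : v +ᵥ c ∈ affineSpan ℝ (range p) :=
      AffineSubspace.vadd_mem_of_mem_direction (by rwa [direction_affineSpan])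
        (convexHull_subset_affineSpan _ hc)
    obtain ⟨t, ht, hmem⟩ := exists_lineMap_centroid_mem_convexHull hcv
    have hmemQ : AffineMap.lineMap c (v +ᵥ c) t ∈ Q :=
      AffineMap.lineMap_mem t hQ (AffineSubspace.vadd_mem_of_mem_direction hvQ hQ)
    have htv := vsub_mem_vectorSpan ℝ (s := convexHull ℝ (range p) ∩ Q) ⟨hmem, hmemQ⟩ ⟨hc, hQ⟩
    rw [AffineMap.lineMap_vsub_left, vadd_vsub] at htv
    exact (Submodule.smul_mem_iff _ ht.ne').1 htv

end Centroid

section Blocks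

variable {α ι : Type*}

/-- The subspace `H` of vectors whose coordinates agree within each block `A j`, as a submodule. -/
def blockConst (R : Type*) [Semiring R] (A : ι → Finset α) : Submodule R (α → R) where
  carrier := {x | ∀ j, ∀ i ∈ A j, ∀ i' ∈ A j, x i = x i'}
  add_mem' hx hy j i hi i' hi' := congrArg₂ (· + ·) (hx j i hi i' hi') (hy j i hi i' hi')
  zero_mem' _ _ _ _ _ := rfl
  smul_mem' a _ hx j i hi i' hi' := congrArg (a • ·) (hx j i hi i' hi')

/-- The classes of indices identified on `blockConst R A` when the blocks are disjoint: the nonempty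
blocks, and the singletons of the indices lying in no block. -/
abbrev BlockClass (A : ι → Finset α) : Type _ :=
  {j // (A j).Nonempty} ⊕ {i // ∀ j, i ∉ A j}

open Classical in
/-- The class of an index; on `blockConst R A` the `i`-th coordinate depends only on it. If the
blocks overlap, an arbitrary block containing `i` is chosen. -/
noncomputable def blockClass (A : ι → Finset α) (i : α) : BlockClass A :=
  if h : ∃ j, i ∈ A j then .inl ⟨h.choose, i, h.choose_spec⟩ else .inr ⟨i, not_exists.1 h⟩

theorem sum_card_sub_one_add_card_nonempty [Fintype ι] (A : ι → Finset α) :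
    ∑ j, ((A j).card - 1) + Fintype.card {j // (A j).Nonempty} = ∑ j, (A j).card := by
  classical
  rw [Fintype.card_subtype, Finset.card_filter, ← Finset.sum_add_distrib]
  refine Finset.sum_congr rfl fun j _ => ?_
  split_ifs with h
  · exact Nat.sub_add_cancel h.card_pos
  · simp [Finset.not_nonempty_iff_eq_empty.1 h]

variable {A : ι → Finset α}

theorem blockClass_of_forall_notMem {i : α} (hi : ∀ j, i ∉ A j) : blockClass A i = .inr ⟨i, hi⟩ :=
  dif_neg (not_exists.2 hi)

section Disjoint

variable (hA : Pairwise (Disjoint on A))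
include hA

theorem blockClass_of_mem {i : α} {j : ι} (hi : i ∈ A j) : blockClass A i = .inl ⟨j, i, hi⟩ := by
  have h : ∃ j, i ∈ A j := ⟨j, hi⟩
  have hj : h.choose = j :=
    hA.eq fun hdisj => Finset.disjoint_left.1 hdisj h.choose_spec hi
  rw [blockClass, dif_pos h]
  simp only [hj]

theorem blockClass_surjective : Function.Surjective (blockClass A) := by
  rintro (⟨j, i, hi⟩ | ⟨i, hi⟩)
  · exact ⟨i, blockClass_of_mem hA hi⟩
  · exact ⟨i, blockClass_of_forall_notMem hi⟩

theorem mem_blockConst_iff_factorsThrough {R : Type*} [Semiring R] {x : α → R} :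
    x ∈ blockConst R A ↔ x.FactorsThrough (blockClass A) := by
  constructor
  · intro hx i i' hii'
    by_cases h : ∃ j, i ∈ A j <;> by_cases h' : ∃ j, i' ∈ A j
    · obtain ⟨j, hj⟩ := h
      obtain ⟨j', hj'⟩ := h'
      rw [blockClass_of_mem hA hj, blockClass_of_mem hA hj'] at hii'
      obtain rfl : j = j' := congrArg Subtype.val (Sum.inl_injective hii')
      exact hx j i hj i' hj'
    all_goals simp_all [blockClass]
  · intro hx j i hi i' hi'
    exact hx (by rw [blockClass_of_mem hA hi, blockClass_of_mem hA hi'])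

theorem range_funLeft_blockClass (R : Type*) [Semiring R] :
    (LinearMap.funLeft R R (blockClass A)).range = blockConst R A := by
  ext x
  rw [mem_blockConst_iff_factorsThrough hA, Function.factorsThrough_iff]
  simp only [LinearMap.mem_range, eq_comm (a := x)]
  rfl

variable [Fintype α] [Fintype ι]

theorem card_blockClass :
    Nat.card (BlockClass A) = Fintype.card α - ∑ j, ((A j).card - 1) := by
  classical
  have hunion : (Finset.univ.biUnion A).card = ∑ j, (A j).card :=
    Finset.card_biUnion fun j _ j' _ hjj' => hA hjj'
  have hcompl : Fintype.card {i // ∀ j, i ∉ A j} = Fintype.card α - ∑ j, (A j).card := by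
    rw [← hunion, ← Finset.card_compl, Fintype.card_subtype]
    congr 1
    ext i
    simp
  have hle : ∑ j, (A j).card ≤ Fintype.card α := hunion ▸ Finset.card_le_univ _
  have hsum := sum_card_sub_one_add_card_nonempty A
  rw [Nat.card_eq_fintype_card, Fintype.card_sum, hcompl]
  omega

theorem finrank_blockConst (R : Type*) [Semiring R] [StrongRankCondition R] :
    finrank R (blockConst R A) = Fintype.card α - ∑ j, ((A j).card - 1) := by
  classical
  rw [← range_funLeft_blockClass hA, LinearMap.finrank_range_of_inj
    (LinearMap.funLeft_injective_of_surjective R R _ (blockClass_surjective hA)),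
    finrank_fintype_fun_eq_card, ← Nat.card_eq_fintype_card, card_blockClass hA]

end Disjoint

end Blocks

section CoordSum

variable {α : Type*} [Fintype α]

/-- The sum of the coordinates as a linear form; its kernel is the direction of a permutohedron. -/
def coordSum (R α : Type*) [CommSemiring R] [Fintype α] : Dual R (α → R) :=
  ∑ i, LinearMap.proj i

theorem coordSum_apply {R : Type*} [CommSemiring R] (x : α → R) : coordSum R α x = ∑ i, x i := by
  simp [coordSum]

theorem ker_coordSum_le {R : Type*} [CommRing R] [DecidableEq α] {p : Submodule R (α → R)}
    (hp : ∀ i j, Pi.single i 1 - Pi.single j 1 ∈ p) : (coordSum R α).ker ≤ p := by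
  intro x hx
  rw [LinearMap.mem_ker, coordSum_apply] at hx
  cases isEmpty_or_nonempty α with
  | inl _ => simp [Subsingleton.elim x 0]
  | inr h =>
    obtain ⟨j⟩ := h
    have hsum : x = ∑ i, x i • (Pi.single i 1 - Pi.single j 1) := by
      simp only [smul_sub, Finset.sum_sub_distrib, ← Finset.sum_smul, hx, zero_smul, sub_zero]
      exact pi_eq_sum_univ' x
    rw [hsum]
    exact p.sum_smul_mem _ fun i _ => hp i j

theorem finrank_inf_ker_coordSum {K : Type*} [Field K] [CharZero K] {p : Submodule K (α → K)}
    (hp : 1 ∈ p) : finrank K ↥(p ⊓ (coordSum K α).ker) = finrank K p - 1 := by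
  cases isEmpty_or_nonempty α with
  | inl _ => simp only [finrank_zero_of_subsingleton]
  | inr _ =>
    have hne : (coordSum K α).domRestrict p ≠ 0 := fun h => by
      simpa [coordSum_apply] using LinearMap.congr_fun h ⟨1, hp⟩
    have hker : finrank K ↥(p ⊓ (coordSum K α).ker) =
        finrank K ((coordSum K α).domRestrict p).ker := by
      rw [← Submodule.map_comap_subtype, Submodule.finrank_map_subtype_eq]
      rfl
    rw [hker, ← Dual.finrank_ker_add_one_of_ne_zero hne, Nat.add_sub_cancel]

end CoordSum

section Permutohedron

/-- The points `(s_σ(1), …, s_σ(r))`, as a family indexed by `σ` (with repetitions if `s` is not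
injective), so that their centroid can be taken. -/
def permutohedronVertex (r : ℕ) (s : ℕ → ℝ) (σ : Equiv.Perm (Fin r)) : Fin r → ℝ :=
  fun i => s (σ i)

variable {r : ℕ} {s : ℕ → ℝ}

theorem permutohedron_eq_convexHull_range :
    permutohedron r s = convexHull ℝ (range (permutohedronVertex r s)) := by
  refine congrArg (convexHull ℝ) (Set.ext fun x => exists_congr fun σ => ?_)
  rw [eq_comm, funext_iff]
  rfl

theorem isCompact_permutohedron : IsCompact (permutohedron r s) := by
  rw [permutohedron_eq_convexHull_range]
  exact (finite_range _).isCompact_convexHull ℝ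

theorem convex_permutohedron : Convex ℝ (permutohedron r s) :=
  convex_convexHull ℝ _

theorem centroid_permutohedronVertex_mem :
    Finset.univ.centroid ℝ (permutohedronVertex r s) ∈ permutohedron r s := by
  rw [permutohedron_eq_convexHull_range]
  exact centroid_univ_mem_convexHull_range _

theorem centroid_permutohedronVertex_apply_eq (i j : Fin r) :
    Finset.univ.centroid ℝ (permutohedronVertex r s) i =
      Finset.univ.centroid ℝ (permutohedronVertex r s) j := by
  rw [Finset.centroid_def, Finset.affineCombination_eq_linear_combination _ _ _
    (Finset.sum_centroidWeights_eq_one_of_nonempty _ _ Finset.univ_nonempty)]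
  simp only [Pi.smul_apply, Finset.sum_apply, permutohedronVertex, Finset.centroidWeights_apply]
  rw [← Equiv.sum_comp (Equiv.mulRight (Equiv.swap i j))]
  simp only [Equiv.coe_mulRight, Equiv.Perm.mul_apply, Equiv.swap_apply_left]

theorem centroid_permutohedronVertex_mem_of_one_mem {H : Submodule ℝ (Fin r → ℝ)} (hH : 1 ∈ H) :
    Finset.univ.centroid ℝ (permutohedronVertex r s) ∈ H := by
  cases isEmpty_or_nonempty (Fin r) with
  | inl _ =>
    rw [Subsingleton.elim (Finset.univ.centroid ℝ (permutohedronVertex r s)) 0]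
    exact H.zero_mem
  | inr h =>
    obtain ⟨i⟩ := h
    convert H.smul_mem (Finset.univ.centroid ℝ (permutohedronVertex r s) i) hH
    ext j
    simpa using centroid_permutohedronVertex_apply_eq j i

theorem vectorSpan_range_permutohedronVertex (hs : InjOn s (Iio r)) :
    vectorSpan ℝ (range (permutohedronVertex r s)) = (coordSum ℝ (Fin r)).ker := by
  apply le_antisymm
  · rw [vectorSpan_def, Submodule.span_le]
    rintro _ ⟨_, ⟨σ, rfl⟩, _, ⟨τ, rfl⟩, rfl⟩
    have hsum (σ : Equiv.Perm (Fin r)) : ∑ i, permutohedronVertex r s σ i = ∑ i : Fin r, s i :=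
      Equiv.sum_comp σ fun i => s i
    simp [coordSum_apply, hsum]
  · refine ker_coordSum_le fun i j => ?_
    rcases eq_or_ne i j with rfl | hij
    · simp
    have hsij : s i - s j ≠ 0 := sub_ne_zero.2 (hs.ne i.2 j.2 (Fin.val_ne_of_ne hij))
    have hsmul : permutohedronVertex r s 1 - permutohedronVertex r s (Equiv.swap i j) =
        (s i - s j) • (Pi.single i 1 - Pi.single j 1) := by
      ext k
      rcases eq_or_ne k i with rfl | hki
      · simp [permutohedronVertex, hij]
      rcases eq_or_ne k j with rfl | hkj
      · simp [permutohedronVertex, hij.symm]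
      · simp [permutohedronVertex, hki, hkj, Equiv.swap_apply_of_ne_of_ne]
    rw [← Submodule.smul_mem_iff _ hsij, ← hsmul]
    exact vsub_mem_vectorSpan ℝ (mem_range_self _) (mem_range_self _)

theorem finrank_vectorSpan_permutohedron_inter (hs : InjOn s (Iio r)) {H : Submodule ℝ (Fin r → ℝ)}
    (hH : 1 ∈ H) :
    finrank ℝ (vectorSpan ℝ (permutohedron r s ∩ H)) = finrank ℝ H - 1 := by
  have hspan := vectorSpan_convexHull_inter_of_centroid_mem (Q := H.toAffineSubspace)
    (centroid_permutohedronVertex_mem_of_one_mem (s := s) hH)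
  rw [H.toAffineSubspace_direction, vectorSpan_range_permutohedronVertex hs] at hspan
  rw [← finrank_inf_ker_coordSum hH, ← hspan, permutohedron_eq_convexHull_range]
  rfl

theorem permutohedron_inter_submodule_nonempty {H : Submodule ℝ (Fin r → ℝ)} (hH : 1 ∈ H) :
    (permutohedron r s ∩ H).Nonempty :=
  ⟨_, centroid_permutohedronVertex_mem, centroid_permutohedronVertex_mem_of_one_mem hH⟩

theorem nonempty_homeomorph_permutohedron_inter_submodule {r' : ℕ} {s' : ℕ → ℝ}
    (hs : InjOn s (Iio r)) (hs' : InjOn s' (Iio r')) {H : Submodule ℝ (Fin r → ℝ)} (hH : 1 ∈ H)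
    (hr' : finrank ℝ H = r') :
    Nonempty (↥(permutohedron r s ∩ H) ≃ₜ permutohedron r' s') := by
  have hdim := finrank_vectorSpan_permutohedron_inter hs' (Submodule.mem_top (x := 1))
  rw [Submodule.top_coe, inter_univ, finrank_top, finrank_fin_fun] at hdim
  exact nonempty_homeomorph_of_finrank_vectorSpan_eq
    (isCompact_permutohedron.inter_right H.closed_of_finiteDimensional)
    (convex_permutohedron.inter H.convex) (permutohedron_inter_submodule_nonempty hH)
    isCompact_permutohedron convex_permutohedron ⟨_, centroid_permutohedronVertex_mem⟩
    (by rw [finrank_vectorSpan_permutohedron_inter hs hH, hdim, hr'])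

end Permutohedron

theorem permutohedron_inter_subspace_general {ι : Type*} [Fintype ι] {r : ℕ} {s : ℕ → ℝ}
    (hs : InjOn s (Iio r)) {A : ι → Finset (Fin r)} (hA : Pairwise (Disjoint on A)) :
    Nonempty (↥(permutohedron r s ∩ {x | ∀ j, ∀ i ∈ A j, ∀ i' ∈ A j, x i = x i'}) ≃ₜ
      ↥(permutohedron (r - ∑ j, ((A j).card - 1)) s)) ∧
    (permutohedron r s ∩ {x | ∀ j, ∀ i ∈ A j, ∀ i' ∈ A j, x i = x i'}).Nonempty := by
  have hone : (1 : Fin r → ℝ) ∈ blockConst ℝ A := fun _ _ _ _ _ => rfl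
  refine ⟨nonempty_homeomorph_permutohedron_inter_submodule hs
    (hs.mono (Iio_subset_Iio (Nat.sub_le _ _))) hone ?_,
    permutohedron_inter_submodule_nonempty hone⟩
  rw [finrank_blockConst hA, Fintype.card_fin]

/-- For a strictly increasing sequence of positive integers `s_1 < ⋯ < s_r`
and pairwise disjoint subsets `A_1,…,A_w ⊆ {1,…,r}` with `|A_j| = k_j`, set
`H = {x : x_i = x_{i'} whenever i, i' lie in the same A_j}` and `K = ∑ (k_j − 1)`.
Then `Π_S ∩ H` is homeomorphic to `Π_{(s_1,…,s_{r−K})}`; in particular it is nonempty. -/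
theorem permutohedron_inter_subspace (r w : ℕ) (s : ℕ → ℕ)
    (hmono : StrictMono s) (hpos : ∀ i, 0 < s i)
    (A : Fin w → Finset (Fin r))
    (hdisj : ∀ j j', j ≠ j' → Disjoint (A j) (A j')) :
    Nonempty
      (↥(permutohedron r (fun i => (s i : ℝ)) ∩
          {x : Fin r → ℝ | ∀ j : Fin w, ∀ i ∈ A j, ∀ i' ∈ A j, x i = x i'}) ≃ₜ
        ↥(permutohedron (r - ∑ j, ((A j).card - 1)) (fun i => (s i : ℝ)))) ∧
    (permutohedron r (fun i => (s i : ℝ)) ∩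
        {x : Fin r → ℝ | ∀ j : Fin w, ∀ i ∈ A j, ∀ i' ∈ A j, x i = x i'}).Nonempty := by
  exact permutohedron_inter_subspace_general (Nat.cast_injective.comp hmono.injective).injOn
    fun j j' hjj' => hdisj j j' hjj'
end
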